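/- Let μ be a probability measure on ℝ with μ((−∞,0]) = 0 such that ∫₀^∞ x dμ(x) < ∞, and let k_μ be its Polya kernel. Then for every t ≠ 0, (1/2π) ∫_ℝ k_μ(r) e^{−i r t} dr = (1/2π) ∫₀^∞ x · (sin(xt/2)/(xt/2))² dμ(x); in particular, this quantity is nonnegative. -/

import Mathlib

open MeasureTheory Real

/-!
A Polya kernel is a mixture of the dilates `r ↦ Λ (r / x)` of the unit triangle function
`Λ u = max 0 (1 - |u|)`. The dilate by `x > 0` has Fourier transform `t ↦ x * Λ̂ (x * t)`, and its
`L¹` norm is proportional to `x`, so a finite first moment of the mixing measure is exactly what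
Fubini's theorem needs to transform under the mixture. Finally `Λ̂ ω = sinc (ω / 2) ^ 2`, by
evenness of `Λ` and an integration by parts.
-/

/-- The unit triangle function, the profile whose dilates are mixed by a Polya kernel. -/
noncomputable def triangle (u : ℝ) : ℝ := max 0 (1 - |u|)

/-- The Polya kernel of a measure on the positive half-line. Only the restriction of `μ` to
`(0, ∞)` matters. If that restriction is infinite, the value at `0` is the junk value `0`. -/
noncomputable def polyaKernel (μ : Measure ℝ) (r : ℝ) : ℝ :=
  ∫ x in Set.Ioi (0 : ℝ), max 0 (1 - |r| / x) ∂μ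

lemma polyaKernel_eq_integral_triangle (μ : Measure ℝ) (r : ℝ) :
    polyaKernel μ r = ∫ x in Set.Ioi (0 : ℝ), triangle (r / x) ∂μ :=
  setIntegral_congr_fun measurableSet_Ioi fun x (hx : 0 < x) ↦ by
    simp only [triangle, abs_div, abs_of_pos hx]

section Triangle

lemma continuous_triangle : Continuous triangle := by
  unfold triangle
  fun_prop

lemma triangle_neg (u : ℝ) : triangle (-u) = triangle u := by
  simp only [triangle, abs_neg]

lemma triangle_of_mem_Icc {u : ℝ} (hu : u ∈ Set.Icc 0 1) : triangle u = 1 - u := by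
  rw [triangle, abs_of_nonneg hu.1, max_eq_right (sub_nonneg.2 hu.2)]

lemma triangle_of_one_le_abs {u : ℝ} (hu : 1 ≤ |u|) : triangle u = 0 :=
  max_eq_left (sub_nonpos.2 hu)

lemma integrable_triangle : Integrable triangle := by
  refine continuous_triangle.integrable_of_hasCompactSupport
    (HasCompactSupport.intro (isCompact_Icc (a := -1) (b := 1)) fun u hu ↦ ?_)
  exact triangle_of_one_le_abs (not_lt.1 fun h ↦ hu (Set.Ioo_subset_Icc_self (abs_lt.1 h)))

lemma one_sub_cos_div_sq {ω : ℝ} (hω : ω ≠ 0) :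
    (1 - cos ω) / ω ^ 2 = sinc (ω / 2) ^ 2 / 2 := by
  rw [sinc_of_ne_zero (div_ne_zero hω two_ne_zero), div_pow, sin_sq_eq_half_sub,
    mul_div_cancel₀ ω two_ne_zero]
  field_simp

lemma integral_one_sub_mul_cos (ω : ℝ) :
    ∫ u in (0 : ℝ)..1, (1 - u) * cos (u * ω) = sinc (ω / 2) ^ 2 / 2 := by
  rcases eq_or_ne ω 0 with rfl | hω
  · norm_num [intervalIntegral.integral_comp_sub_left (fun u : ℝ ↦ u)]
  have hderiv : ∀ u : ℝ, HasDerivAt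
      (fun u ↦ (1 - u) * (sin (u * ω) / ω) - cos (u * ω) / ω ^ 2) ((1 - u) * cos (u * ω)) u := by
    intro u
    have hu : HasDerivAt (fun u ↦ u * ω) ω u := hasDerivAt_mul_const ω
    convert! (((hasDerivAt_id' u).const_sub 1).mul (hu.sin.div_const ω)).sub
      (hu.cos.div_const (ω ^ 2)) using 1
    field_simp
    ring
  rw [intervalIntegral.integral_eq_sub_of_hasDerivAt (fun u _ ↦ hderiv u)
    (Continuous.intervalIntegrable (by fun_prop) 0 1), ← one_sub_cos_div_sq hω]
  simp only [sub_self, zero_mul, one_mul, sin_zero, cos_zero]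
  ring

lemma integral_triangle_mul_cos (ω : ℝ) :
    ∫ u, triangle u * cos (u * ω) = sinc (ω / 2) ^ 2 := by
  have hsupp : ∀ u ∈ Set.Ioi (0 : ℝ) \ Set.Ioc 0 1, triangle u * cos (u * ω) = 0 := by
    rintro u ⟨hu0, hu1⟩
    have hu : 1 < u := not_le.1 fun h ↦ hu1 ⟨hu0, h⟩
    rw [triangle_of_one_le_abs (hu.le.trans (le_abs_self u)), zero_mul]
  calc ∫ u, triangle u * cos (u * ω)
      = ∫ u, triangle |u| * cos (|u| * ω) := by
        congr 1 with u
        rcases abs_choice u with h | h <;> simp only [h, triangle_neg, neg_mul, cos_neg]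
    _ = 2 * ∫ u in Set.Ioi 0, triangle u * cos (u * ω) :=
        integral_comp_abs (f := fun u ↦ triangle u * cos (u * ω))
    _ = 2 * ∫ u in (0 : ℝ)..1, triangle u * cos (u * ω) := by
        rw [intervalIntegral.integral_of_le zero_le_one,
          setIntegral_eq_of_subset_of_forall_sdiff_eq_zero measurableSet_Ioi
            Set.Ioc_subset_Ioi_self hsupp]
    _ = 2 * ∫ u in (0 : ℝ)..1, (1 - u) * cos (u * ω) := by
        congr 1
        refine intervalIntegral.integral_congr fun u hu ↦ ?_
        rw [Set.uIcc_of_le zero_le_one] at hu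
        simp only [triangle_of_mem_Icc hu]
    _ = sinc (ω / 2) ^ 2 := by rw [integral_one_sub_mul_cos, mul_div_cancel₀ _ two_ne_zero]

end Triangle

section FourierIntegral

lemma norm_cexp_neg_I_mul_mul (r t : ℝ) : ‖Complex.exp (-(Complex.I * r * t))‖ = 1 := by
  rw [Complex.norm_exp]
  simp

lemma integrable_mul_cexp {f : ℝ → ℝ} (hf : Integrable f) (t : ℝ) :
    Integrable fun r ↦ (f r : ℂ) * Complex.exp (-(Complex.I * r * t)) :=
  hf.ofReal.mul_bdd (c := 1) (Continuous.aestronglyMeasurable (by fun_prop))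
    (.of_forall fun r ↦ (norm_cexp_neg_I_mul_mul r t).le)

lemma integral_mul_cexp_of_even {f : ℝ → ℝ} (hf : Integrable f) (heven : Function.Even f) (t : ℝ) :
    ∫ r : ℝ, (f r : ℂ) * Complex.exp (-(Complex.I * r * t)) =
      ((∫ r, f r * cos (r * t) : ℝ) : ℂ) := by
  set F : ℝ → ℂ := fun r ↦ (f r : ℂ) * Complex.exp (-(Complex.I * r * t)) with hF
  have hconj : ∀ r, (starRingEnd ℂ) (F r) = F (-r) := fun r ↦ by
    simp [hF, heven r, ← Complex.exp_conj]
  have hre : ∀ r, (F r).re = f r * cos (r * t) := fun r ↦ by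
    simp [hF, Complex.exp_re]
  have hreal : (starRingEnd ℂ) (∫ r, F r) = ∫ r, F r := by
    rw [← integral_conj, ← integral_neg_eq_self F]
    simp only [hconj]
  rw [← Complex.conj_eq_iff_re.1 hreal, ← RCLike.re_eq_complex_re,
    ← integral_re (integrable_mul_cexp hf t)]
  exact congrArg Complex.ofReal (integral_congr_ae (.of_forall hre))

lemma integral_triangle_mul_cexp (ω : ℝ) :
    ∫ u : ℝ, (triangle u : ℂ) * Complex.exp (-(Complex.I * u * ω)) =
      ((sinc (ω / 2) ^ 2 : ℝ) : ℂ) := by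
  rw [integral_mul_cexp_of_even integrable_triangle triangle_neg, integral_triangle_mul_cos]

end FourierIntegral

section ScaleMixture

lemma sigmaFinite_of_integrable_of_ae_ne_zero {α E : Type*} [MeasurableSpace α]
    [NormedAddCommGroup E] {ν : Measure α} {f : α → E} (hf : Integrable f ν)
    (hne : ∀ᵐ x ∂ν, f x ≠ 0) : SigmaFinite ν := by
  obtain ⟨s, hs, hzero, hfin⟩ := hf.aefinStronglyMeasurable.exists_set_sigmaFinite
  have hmem : ∀ᵐ x ∂ν, x ∈ s := by
    filter_upwards [hne, (ae_restrict_iff' hs.compl).1 hzero] with x hx hxs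
    exact not_not.1 fun h ↦ hx (hxs h)
  rwa [Measure.restrict_eq_self_of_ae_mem hmem] at hfin

variable {ν : Measure ℝ}

lemma integrable_comp_div_prod {E : Type*} [NormedAddCommGroup E] [SFinite ν] {g : ℝ → E}
    (hgm : StronglyMeasurable g) (hg : Integrable g) (hν : Integrable (fun x ↦ x) ν)
    (hne : ∀ᵐ x ∂ν, x ≠ 0) :
    Integrable (fun p : ℝ × ℝ ↦ g (p.2 / p.1)) (ν.prod volume) := by
  have hmeas : StronglyMeasurable fun p : ℝ × ℝ ↦ g (p.2 / p.1) :=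
    hgm.comp_measurable (by fun_prop)
  refine (integrable_prod_iff hmeas.aestronglyMeasurable).2 ⟨?_, ?_⟩
  · filter_upwards [hne] with x hx using hg.comp_div hx
  · simp only [Measure.integral_comp_div (fun u ↦ ‖g u‖), smul_eq_mul]
    exact hν.abs.mul_const _

lemma integral_comp_div_mul_cexp (g : ℝ → ℂ) {x : ℝ} (hx : x ≠ 0) (t : ℝ) :
    ∫ r : ℝ, g (r / x) * Complex.exp (-(Complex.I * r * t)) =
      |x| * ∫ u : ℝ, g u * Complex.exp (-(Complex.I * u * (x * t : ℝ))) := by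
  rw [← Complex.real_smul, ← Measure.integral_comp_div]
  congr 1 with r
  have hxc : (x : ℂ) ≠ 0 := Complex.ofReal_ne_zero.2 hx
  congr 2
  push_cast
  field_simp

lemma integral_scaleMixture_mul_cexp {g : ℝ → ℂ} (hgm : StronglyMeasurable g)
    (hg : Integrable g) (hν : Integrable (fun x ↦ x) ν) (hne : ∀ᵐ x ∂ν, x ≠ 0) (t : ℝ) :
    ∫ r : ℝ, (∫ x, g (r / x) ∂ν) * Complex.exp (-(Complex.I * r * t)) =
      ∫ x, (|x| * ∫ u : ℝ, g u * Complex.exp (-(Complex.I * u * (x * t : ℝ)))) ∂ν := by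
  have : SigmaFinite ν := sigmaFinite_of_integrable_of_ae_ne_zero hν hne
  have hint : Integrable (fun p : ℝ × ℝ ↦ g (p.2 / p.1) * Complex.exp (-(Complex.I * p.2 * t)))
      (ν.prod volume) :=
    (integrable_comp_div_prod hgm hg hν hne).mul_bdd (c := 1)
      (Continuous.aestronglyMeasurable (by fun_prop))
      (.of_forall fun p ↦ (norm_cexp_neg_I_mul_mul p.2 t).le)
  calc ∫ r : ℝ, (∫ x, g (r / x) ∂ν) * Complex.exp (-(Complex.I * r * t))
      = ∫ r : ℝ, ∫ x, g (r / x) * Complex.exp (-(Complex.I * r * t)) ∂ν := by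
        simp only [integral_mul_const]
    _ = ∫ x, (∫ r : ℝ, g (r / x) * Complex.exp (-(Complex.I * r * t))) ∂ν :=
        (integral_integral_swap hint).symm
    _ = ∫ x, (|x| * ∫ u : ℝ, g u * Complex.exp (-(Complex.I * u * (x * t : ℝ)))) ∂ν := by
        exact integral_congr_ae (hne.mono fun x hx ↦ integral_comp_div_mul_cexp g hx t)

end ScaleMixture

lemma integral_polyaKernel_mul_cexp {μ : Measure ℝ}
    (hmean : IntegrableOn (fun x : ℝ ↦ x) (Set.Ioi 0) μ) (t : ℝ) :
    ∫ r : ℝ, (polyaKernel μ r : ℂ) * Complex.exp (-(Complex.I * r * t)) =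
      ((∫ x in Set.Ioi (0 : ℝ), x * sinc (x * t / 2) ^ 2 ∂μ : ℝ) : ℂ) := by
  have hpos : ∀ᵐ x ∂μ.restrict (Set.Ioi 0), (0 : ℝ) < x := ae_restrict_mem measurableSet_Ioi
  simp only [polyaKernel_eq_integral_triangle, ← integral_complex_ofReal]
  rw [integral_scaleMixture_mul_cexp (g := fun u ↦ (triangle u : ℂ))
    (Complex.continuous_ofReal.comp continuous_triangle).stronglyMeasurable
    integrable_triangle.ofReal hmean (hpos.mono fun _ hx ↦ hx.ne')]
  refine integral_congr_ae ?_
  filter_upwards [hpos] with x hx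
  rw [integral_triangle_mul_cexp, abs_of_pos hx, ← Complex.ofReal_mul]

lemma setIntegral_mul_sinc_sq (μ : Measure ℝ) {t : ℝ} (ht : t ≠ 0) :
    ∫ x in Set.Ioi (0 : ℝ), x * sinc (x * t / 2) ^ 2 ∂μ =
      ∫ x in Set.Ioi (0 : ℝ), x * (sin (x * t / 2) / (x * t / 2)) ^ 2 ∂μ :=
  setIntegral_congr_fun measurableSet_Ioi fun x (hx : 0 < x) ↦ by
    simp only [sinc_of_ne_zero (div_ne_zero (mul_ne_zero hx.ne' ht) two_ne_zero)]

theorem polya_kernel_fourier_sinc_general (μ : Measure ℝ)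
    (hmean : IntegrableOn (fun x : ℝ ↦ x) (Set.Ioi 0) μ) (t : ℝ) :
    (1 / (2 * π) : ℂ) * ∫ r : ℝ, (polyaKernel μ r : ℂ) * Complex.exp (-(Complex.I * r * t))
      = ((1 / (2 * π)) * ∫ x in Set.Ioi (0 : ℝ), x * sinc (x * t / 2) ^ 2 ∂μ : ℝ) ∧
    0 ≤ (1 / (2 * π)) * ∫ x in Set.Ioi (0 : ℝ), x * sinc (x * t / 2) ^ 2 ∂μ := by
  refine ⟨?_, mul_nonneg (by positivity) (setIntegral_nonneg measurableSet_Ioi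
    fun x (hx : 0 < x) ↦ by positivity)⟩
  rw [integral_polyaKernel_mul_cexp hmean]
  push_cast
  rfl

/-- The inverse Fourier transform of a Polya kernel: if `μ` has positive support and a
finite mean, then for `t ≠ 0`,
`(1/2π) ∫_ℝ k_μ(r) e^{-irt} dr = (1/2π) ∫₀^∞ x * sinc(xt/2)² dμ(x) ≥ 0`. -/
theorem polya_kernel_fourier_sinc (μ : Measure ℝ) [IsProbabilityMeasure μ]
    (hμ : μ (Set.Iic 0) = 0)
    (hmean : Integrable (fun x : ℝ => x) μ)
    (k : ℝ → ℝ)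
    (hk : ∀ r : ℝ, k r = ∫ x in Set.Ioi (0 : ℝ), max 0 (1 - |r| / x) ∂μ)
    (t : ℝ) (ht : t ≠ 0) :
    (1 / (2 * π) : ℂ) * ∫ r : ℝ, (k r : ℂ) * Complex.exp (-(Complex.I * r * t))
      = ((1 / (2 * π)) *
          ∫ x in Set.Ioi (0 : ℝ), x * (Real.sin (x * t / 2) / (x * t / 2)) ^ 2 ∂μ : ℝ) ∧
    0 ≤ (1 / (2 * π)) *
          ∫ x in Set.Ioi (0 : ℝ), x * (Real.sin (x * t / 2) / (x * t / 2)) ^ 2 ∂μ := by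
  obtain rfl : k = polyaKernel μ := funext hk
  exact setIntegral_mul_sinc_sq μ ht ▸ polya_kernel_fourier_sinc_general μ hmean.integrableOn t
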